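/- For every real number x ≥ 1, one has 6·x^(3/4) ≥ 6·(x − x^(1/2)/2)^(3/4) + (x^(1/2)/2)^(1/2). -/

import Mathlib

/-!
By concavity, `t ↦ t ^ (3 / 4)` lies below its tangent at `x`, so the step from `x` down to
`x - √x / 2` lowers it by at least `3 / 8 * x ^ (1 / 4)`. The remaining term is exactly
`√2 / 2 * x ^ (1 / 4)`, so a prefactor `C` suffices as soon as `√2 / 2 ≤ 3 / 8 * C`.
-/

theorem rpow_sub_le_rpow_sub_mul {p x y : ℝ} (hp₀ : 0 ≤ p) (hp₁ : p ≤ 1) (hx : 0 < x)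
    (hyx : y ≤ x) : (x - y) ^ p ≤ x ^ p - p * x ^ (p - 1) * y := by
  have ratio_ge : -1 ≤ -(y / x) := neg_le_neg ((div_le_one hx).2 hyx)
  have bernoulli : (1 + -(y / x)) ^ p ≤ 1 + p * -(y / x) :=
    rpow_one_add_le_one_add_mul_self ratio_ge hp₀ hp₁
  calc (x - y) ^ p = (x * (1 + -(y / x))) ^ p := by congr 1; field_simp; ring
    _ = x ^ p * (1 + -(y / x)) ^ p := Real.mul_rpow hx.le (by linarith)
    _ ≤ x ^ p * (1 + p * -(y / x)) := by gcongr
    _ = x ^ p - p * x ^ (p - 1) * y := by rw [Real.rpow_sub_one hx.ne']; ring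

theorem rpow_half_div_two_le_self {x : ℝ} (hx : 1 / 4 ≤ x) : x ^ ((1 : ℝ) / 2) / 2 ≤ x := by
  have sqrt_le : √x ≤ 2 * x := Real.sqrt_le_iff.2 ⟨by linarith, by nlinarith⟩
  rw [← Real.sqrt_eq_rpow]
  linarith

theorem sub_rpow_half_div_two_rpow_le {x : ℝ} (hx : 1 / 4 ≤ x) :
    (x - x ^ ((1 : ℝ) / 2) / 2) ^ ((3 : ℝ) / 4) ≤
      x ^ ((3 : ℝ) / 4) - 3 / 8 * x ^ ((1 : ℝ) / 4) := by
  have hx₀ : 0 < x := by linarith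
  have slope_mul_step :
      x ^ ((3 : ℝ) / 4 - 1) * x ^ ((1 : ℝ) / 2) = x ^ ((1 : ℝ) / 4) := by
    rw [← Real.rpow_add hx₀]
    norm_num
  have tangent := rpow_sub_le_rpow_sub_mul (p := 3 / 4) (by norm_num) (by norm_num) hx₀
    (rpow_half_div_two_le_self hx)
  linarith

theorem rpow_half_div_two_rpow_half {x : ℝ} (hx : 0 ≤ x) :
    (x ^ ((1 : ℝ) / 2) / 2) ^ ((1 : ℝ) / 2) = √2 / 2 * x ^ ((1 : ℝ) / 4) := by
  rw [Real.div_rpow (by positivity) zero_le_two, ← Real.rpow_mul hx, ← Real.sqrt_eq_rpow,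
    Real.sqrt_div_self', show (1 : ℝ) / 2 * (1 / 2) = 1 / 4 by norm_num]
  ring

theorem eflh_recursion_basic_general {C x : ℝ} (hC : √2 / 2 ≤ 3 / 8 * C) (hx : 1 / 4 ≤ x) :
    C * x ^ ((3 : ℝ) / 4) ≥
      C * (x - x ^ ((1 : ℝ) / 2) / 2) ^ ((3 : ℝ) / 4) +
        (x ^ ((1 : ℝ) / 2) / 2) ^ ((1 : ℝ) / 2) := by
  have hx₀ : 0 ≤ x := by linarith
  have hC₀ : 0 ≤ C := by linarith [Real.sqrt_nonneg 2]
  calc C * (x - x ^ ((1 : ℝ) / 2) / 2) ^ ((3 : ℝ) / 4) + (x ^ ((1 : ℝ) / 2) / 2) ^ ((1 : ℝ) / 2)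
    _ ≤ C * (x ^ ((3 : ℝ) / 4) - 3 / 8 * x ^ ((1 : ℝ) / 4)) +
        3 / 8 * C * x ^ ((1 : ℝ) / 4) := by
      rw [rpow_half_div_two_rpow_half hx₀]
      gcongr
      exact sub_rpow_half_div_two_rpow_le hx
    _ = C * x ^ ((3 : ℝ) / 4) := by ring

/-- Lemma 3.3 of the paper: the key recursion inequality for the
`O(|I|^(3/4))` adaptive regret bound of EFLH. -/
theorem eflh_recursion_basic (x : ℝ) (hx : 1 ≤ x) :
    6 * x ^ ((3 : ℝ) / 4) ≥
      6 * (x - x ^ ((1 : ℝ) / 2) / 2) ^ ((3 : ℝ) / 4) +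
        (x ^ ((1 : ℝ) / 2) / 2) ^ ((1 : ℝ) / 2) :=
  eflh_recursion_basic_general (by linarith [Real.sqrt_two_lt_three_halves]) (by linarith)
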